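/- arXiv:2508.05980 — 3 statements merged into one kernel-verified Lean document; each statement's English description precedes it below -/
import Mathlib

section
/- Let s ≥ 2 and 2 ≤ r' ≤ s' be integers with s' − r' < s − 1. Let U ⊆ ℂ^s be a connected open set with U ∩ S(Ω_{1,s}) ≠ ∅, and let F : U → ℂ^{r'×s'} be a holomorphic map such that F(z)·F(z)ᴴ = I_{r'} for every z ∈ U ∩ S(Ω_{1,s}). Then F is constant on U. -/
open scoped BigOperators
open Matrix

noncomputable section

/-- Hermitian dot product of row vectors: `z ⬝ wᴴ`.  In particular `z` lies on the
Shilov boundary `S(Ω_{1,s})` (the unit sphere) iff `cdot z z = 1`. -/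
def cdot {n : ℕ} (z w : Fin n → ℂ) : ℂ := ∑ i, z i * (starRingEnd ℂ) (w i)

/-!
Let `f` be a row of `F`, let `p ∈ U` be a unit vector and let `v` be complex orthogonal to `p`.
The inner products of the rows are constant on the sphere; differentiating them along `v` and along
`I • v` shows that `Df(p) v` is orthogonal to all rows at `p`. The codimension hypothesis then
forces a nonzero such `v` with `Df(p) v = 0`.

The circles `a • p + ζ • v`, where `‖ζ‖` is fixed and `a² + ‖ζ‖² = 1`, lie on the sphere and have a
center independent of `v`, while `‖f‖ = 1` on each of them. The maximum principle turns this into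
`‖Df(p) v‖ = ‖Df(p) w‖` for all unit vectors `v` and `w` orthogonal to `p`. Hence `Df(p)` vanishes
on the whole complex tangent space, so `f` is constant along great circles with velocity in it, and
one-variable identity theorems in each of the coordinates `α`, `ζ` of the points `α • p + ζ • v`
spread this to a neighborhood of `p`.
-/

section MaximumPrinciple

open Metric
open scoped InnerProductSpace

theorem exists_mem_sphere_re_center_le {k : ℂ → ℂ} {c : ℂ} {r : ℝ} (hr : 0 < r)
    (hk : DiffContOnCl ℂ k (ball c r)) : ∃ ζ ∈ sphere c r, (k c).re ≤ (k ζ).re := by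
  obtain ⟨ζ, hζ, hmax⟩ := Complex.exists_mem_frontier_isMaxOn_norm isBounded_ball
    (nonempty_ball.2 hr) (Complex.differentiable_exp.comp_diffContOnCl hk)
  refine ⟨ζ, by rwa [frontier_ball c hr.ne'] at hζ, ?_⟩
  have hexp : ‖Complex.exp (k c)‖ ≤ ‖Complex.exp (k ζ)‖ :=
    hmax (subset_closure (mem_ball_self hr))
  simpa only [Complex.norm_exp, Real.exp_le_exp] using hexp

variable {G : Type*} [NormedAddCommGroup G] [InnerProductSpace ℂ G]

-- On the circle, `‖g ζ - g c‖² = M² + ‖g c‖² - 2 Re ⟪g c, g ζ⟫`, and the real part of the inner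
-- product is harmonic in `ζ`, so the mean of the left side is `M² - ‖g c‖²` for `g` and `h` alike.
theorem exists_norm_sub_center_le_norm_sub_center {g h : ℂ → G} {c : ℂ} {r M : ℝ} (hr : 0 < r)
    (hg : DiffContOnCl ℂ g (ball c r)) (hh : DiffContOnCl ℂ h (ball c r))
    (hgM : ∀ ζ ∈ sphere c r, ‖g ζ‖ = M) (hhM : ∀ ζ ∈ sphere c r, ‖h ζ‖ = M) (hgh : g c = h c) :
    ∃ ζ ∈ sphere c r, ∃ ξ ∈ sphere c r, ‖g ζ - g c‖ ≤ ‖h ξ - h c‖ := by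
  have inner_diffContOnCl {k : ℂ → G} (hk : DiffContOnCl ℂ k (ball c r)) :
      DiffContOnCl ℂ (fun ζ ↦ ⟪g c, k ζ⟫_ℂ) (ball c r) :=
    (innerSL ℂ (g c)).differentiable.comp_diffContOnCl hk
  obtain ⟨ζ, hζ, hζre⟩ := exists_mem_sphere_re_center_le hr (inner_diffContOnCl hg)
  obtain ⟨ξ, hξ, hξre⟩ := exists_mem_sphere_re_center_le hr (inner_diffContOnCl hh).neg
  refine ⟨ζ, hζ, ξ, hξ, (sq_le_sq₀ (norm_nonneg _) (norm_nonneg _)).1 ?_⟩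
  have hre : (⟪g c, h ξ⟫_ℂ).re ≤ (⟪g c, g ζ⟫_ℂ).re := by
    simp only [Pi.neg_apply, Complex.neg_re, ← hgh] at hξre
    linarith
  rw [norm_sub_rev, norm_sub_rev (h ξ), norm_sub_sq (𝕜 := ℂ), norm_sub_sq (𝕜 := ℂ), hgM ζ hζ,
    hhM ξ hξ, ← hgh, RCLike.re_to_complex, RCLike.re_to_complex]
  linarith

end MaximumPrinciple

section IdentityTheorem

open Filter Metric Set Topology

variable {E G : Type*} [NormedAddCommGroup E] [NormedSpace ℂ E]
  [NormedAddCommGroup G] [NormedSpace ℂ G] [CompleteSpace G]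

theorem eqOn_ball_of_eventuallyEq {f g : E → G} {z w : E} {r : ℝ}
    (hf : DifferentiableOn ℂ f (ball z r)) (hg : DifferentiableOn ℂ g (ball z r))
    (hw : w ∈ ball z r) (hfg : f =ᶠ[𝓝 w] g) : EqOn f g (ball z r) := by
  intro x hx
  let line : ℂ → E := fun ζ ↦ w + ζ • (x - w)
  have hline : Differentiable ℂ line := by fun_prop
  have hline0 : line 0 = w := by simp [line]
  have hline1 : line 1 = x := by simp [line]
  have hopen : IsOpen (line ⁻¹' ball z r) := isOpen_ball.preimage hline.continuous
  have hconvex : Convex ℝ (line ⁻¹' ball z r) :=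
    ((convex_ball z r).translate_preimage_right w).linear_preimage
      ((LinearMap.toSpanSingleton ℂ E (x - w)).restrictScalars ℝ)
  have hanalytic {k : E → G} (hk : DifferentiableOn ℂ k (ball z r)) :
      AnalyticOnNhd ℂ (k ∘ line) (line ⁻¹' ball z r) :=
    (hk.comp hline.differentiableOn (mapsTo_preimage _ _)).analyticOnNhd hopen
  have hnear : f ∘ line =ᶠ[𝓝 0] g ∘ line :=
    hline.continuous.continuousAt.eventually (p := fun y ↦ f y = g y) (by rwa [hline0])
  have heq : EqOn (f ∘ line) (g ∘ line) (line ⁻¹' ball z r) :=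
    (hanalytic hf).eqOn_of_preconnected_of_eventuallyEq (hanalytic hg) hconvex.isPreconnected
      (by rwa [mem_preimage, hline0]) hnear
  simpa only [Function.comp_apply, hline1] using heq (by rwa [mem_preimage, hline1] : (1 : ℂ) ∈ _)

theorem eqOn_of_isPreconnected_of_eventuallyEq {f g : E → G} {U : Set E} {p : E}
    (hU : IsOpen U) (hUc : IsPreconnected U) (hf : DifferentiableOn ℂ f U)
    (hg : DifferentiableOn ℂ g U) (hp : p ∈ U) (hfg : f =ᶠ[𝓝 p] g) : EqOn f g U := by
  suffices U ⊆ {z | f =ᶠ[𝓝 z] g} from fun z hz ↦ (this hz).self_of_nhds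
  refine hUc.subset_of_closure_inter_subset isOpen_setOfPred_eventually_nhds ⟨p, hp, hfg⟩ ?_
  rintro z ⟨hz, hzU⟩
  obtain ⟨r, hr, hrU⟩ := Metric.isOpen_iff.1 hU z hzU
  obtain ⟨w, hw, hzw⟩ := Metric.mem_closure_iff.1 hz r hr
  have hball : EqOn f g (ball z r) :=
    eqOn_ball_of_eventuallyEq (hf.mono hrU) (hg.mono hrU) (mem_ball'.2 hzw) hw
  exact hball.eventuallyEq_of_mem (ball_mem_nhds z hr)

theorem eqOn_of_eqOn_sphere {f g : ℂ → G} {U : Set ℂ} {c : ℂ} {r : ℝ} (hU : IsOpen U)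
    (hUc : IsPreconnected U) (hf : DifferentiableOn ℂ f U) (hg : DifferentiableOn ℂ g U)
    (hr : 0 < r) (hrU : closedBall c r ⊆ U) (hfg : EqOn f g (sphere c r)) : EqOn f g U := by
  have hclosure : closure (ball c r) ⊆ U := closure_ball_subset_closedBall.trans hrU
  have hball : EqOn f g (ball c r) :=
    Complex.eqOn_of_eqOn_frontier isBounded_ball (hf.mono hclosure).diffContOnCl
      (hg.mono hclosure).diffContOnCl (by rwa [frontier_ball c hr.ne'])
  exact eqOn_of_isPreconnected_of_eventuallyEq hU hUc hf hg (hrU (mem_closedBall_self hr.le))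
    (hball.eventuallyEq_of_mem (ball_mem_nhds c hr))

theorem tendsto_ofReal_cos_nhdsNE_zero :
    Tendsto (fun t : ℝ ↦ (Real.cos t : ℂ)) (𝓝[≠] 0) (𝓝[≠] 1) := by
  refine tendsto_nhdsWithin_iff.2 ⟨?_, ?_⟩
  · have hcont : ContinuousAt (fun t : ℝ ↦ (Real.cos t : ℂ)) 0 := by fun_prop
    simpa using hcont.tendsto.mono_left nhdsWithin_le_nhds
  · filter_upwards [self_mem_nhdsWithin,
      nhdsWithin_le_nhds (Ioo_mem_nhds (neg_lt_zero.2 Real.two_pi_pos) Real.two_pi_pos)]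
      with t ht0 ht
    rw [mem_compl_singleton_iff, ne_eq, Complex.ofReal_eq_one,
      Real.cos_eq_one_iff_of_lt_of_lt ht.1 ht.2]
    exact ht0

-- The points `(cos t, sin t • u)` form a real surface in `ℂ²`. Fixing `t`, the values on a circle
-- determine `g (cos t, ·)`; fixing `ζ` afterwards, the real points `cos t` accumulate at `1`.
theorem eqOn_prod_of_eventually_cos_sin_eq {g : ℂ × ℂ → G} {A B : Set ℂ} {c : G} (hA : IsOpen A)
    (hAc : IsPreconnected A) (hA1 : (1 : ℂ) ∈ A) (hB : IsOpen B) (hBc : IsPreconnected B)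
    (hB0 : (0 : ℂ) ∈ B) (hg : DifferentiableOn ℂ g (A ×ˢ B))
    (h : ∀ᶠ t : ℝ in 𝓝 0, ∀ u : ℂ, ‖u‖ = 1 → g (Real.cos t, Real.sin t * u) = c) :
    ∀ α ∈ A, ∀ ζ ∈ B, g (α, ζ) = c := by
  have hslice : ∀ᶠ t : ℝ in 𝓝[≠] 0, ∀ ζ ∈ B, g (Real.cos t, ζ) = c := by
    obtain ⟨r, hr, hrB⟩ := Metric.isOpen_iff.1 hB 0 hB0
    have hcosA : ∀ᶠ t : ℝ in 𝓝[≠] 0, (Real.cos t : ℂ) ∈ A :=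
      (tendsto_nhds_of_tendsto_nhdsWithin tendsto_ofReal_cos_nhdsNE_zero).eventually_mem
        (hA.mem_nhds hA1)
    filter_upwards [hcosA, nhdsWithin_le_nhds h, self_mem_nhdsWithin,
      nhdsWithin_le_nhds (ball_mem_nhds 0 (lt_min hr Real.pi_pos))] with t htA ht ht0 htr
    rw [Metric.mem_ball, dist_zero_right, Real.norm_eq_abs, lt_min_iff] at htr
    have hsin : Real.sin t ≠ 0 := by
      rwa [ne_eq, Real.sin_eq_zero_iff_of_lt_of_lt (neg_lt_of_abs_lt htr.2) (lt_of_abs_lt htr.2)]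
    refine eqOn_of_eqOn_sphere (c := 0) (g := fun _ ↦ c) hB hBc
      (hg.comp (by fun_prop) fun ζ hζ ↦ ⟨htA, hζ⟩) (differentiableOn_const c) (abs_pos.2 hsin)
      ((closedBall_subset_ball (Real.abs_sin_le_abs.trans_lt htr.1)).trans hrB) fun ζ hζ ↦ ?_
    have hu := ht (ζ / Real.sin t) (by
      rw [norm_div, Complex.norm_real, mem_sphere_zero_iff_norm.1 hζ, Real.norm_eq_abs,
        div_self (abs_ne_zero.2 hsin)])
    rwa [mul_div_cancel₀ _ (Complex.ofReal_ne_zero.2 hsin)] at hu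
  intro α hα ζ hζ
  have hfreq : ∃ᶠ α in 𝓝[≠] (1 : ℂ), g (α, ζ) = c :=
    tendsto_ofReal_cos_nhdsNE_zero.frequently (hslice.mono fun t ht ↦ ht ζ hζ).frequently
  have hanalytic : AnalyticOnNhd ℂ (fun α ↦ g (α, ζ)) A :=
    DifferentiableOn.analyticOnNhd (hg.comp (by fun_prop) fun α hα ↦ ⟨hα, hζ⟩) hA
  exact hanalytic.eqOn_of_preconnected_of_frequently_eq analyticOnNhd_const hAc hA1 hfreq hα

end IdentityTheorem

section ComplexPlaneSections

open Metric Set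
open scoped InnerProductSpace

variable {E : Type*} [NormedAddCommGroup E]

theorem norm_smul_add_smul_sub_le [NormedSpace ℂ E] {p v : E} (hp : ‖p‖ = 1) (hv : ‖v‖ = 1)
    (α ζ : ℂ) : ‖α • p + ζ • v - p‖ ≤ ‖α - 1‖ + ‖ζ‖ :=
  calc ‖α • p + ζ • v - p‖ = ‖(α - 1) • p + ζ • v‖ := by
        rw [sub_smul, one_smul, sub_add_eq_add_sub]
    _ ≤ ‖(α - 1) • p‖ + ‖ζ • v‖ := norm_add_le _ _
    _ = ‖α - 1‖ + ‖ζ‖ := by rw [norm_smul, norm_smul, hp, hv, mul_one, mul_one]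

theorem mapsTo_smul_add_smul_closedBall [NormedSpace ℂ E] {p v : E} (hp : ‖p‖ = 1) (hv : ‖v‖ = 1)
    {α : ℂ} {r : ℝ} (hα : ‖α - 1‖ ≤ r) :
    MapsTo (fun ζ : ℂ ↦ α • p + ζ • v) (closedBall 0 r) (closedBall p (2 * r)) := by
  intro ζ hζ
  rw [mem_closedBall_zero_iff] at hζ
  rw [mem_closedBall_iff_norm]
  linarith [norm_smul_add_smul_sub_le hp hv α ζ]

variable [InnerProductSpace ℂ E] {p v : E}

theorem norm_smul_add_smul_eq_one (hp : ‖p‖ = 1) (hv : ‖v‖ = 1) (hpv : ⟪p, v⟫_ℂ = 0) {α ζ : ℂ}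
    (h : ‖α‖ ^ 2 + ‖ζ‖ ^ 2 = 1) : ‖α • p + ζ • v‖ = 1 := by
  rw [← pow_eq_one_iff_of_nonneg (norm_nonneg _) two_ne_zero, norm_add_sq (𝕜 := ℂ),
    inner_smul_left, inner_smul_right, hpv]
  simpa [norm_smul, hp, hv] using h

theorem exists_norm_eq_one_and_eq_smul_add_smul (hp : ‖p‖ = 1) (hv : ‖v‖ = 1) (hpv : ⟪p, v⟫_ℂ = 0)
    (z : E) : ∃ w : E, ‖w‖ = 1 ∧ ⟪p, w⟫_ℂ = 0 ∧
      z = ⟪p, z⟫_ℂ • p + (‖z - ⟪p, z⟫_ℂ • p‖ : ℂ) • w := by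
  set y : E := z - ⟪p, z⟫_ℂ • p with hy
  have hpy : ⟪p, y⟫_ℂ = 0 := by simp [hy, hp]
  rcases eq_or_ne y 0 with hy0 | hy0
  · exact ⟨v, hv, hpv, by rw [hy0, norm_zero, Complex.ofReal_zero, zero_smul, add_zero,
      ← sub_eq_zero, ← hy, hy0]⟩
  · refine ⟨(‖y‖ : ℂ)⁻¹ • y, norm_smul_inv_norm hy0, by rw [inner_smul_right, hpy, mul_zero], ?_⟩
    rw [smul_inv_smul₀ (Complex.ofReal_ne_zero.2 (norm_ne_zero_iff.2 hy0)), hy, add_sub_cancel]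

end ComplexPlaneSections

section GreatCircle

open scoped InnerProductSpace

variable {E : Type*} [NormedAddCommGroup E]

/-- The great circle through `p` with initial velocity `v`. It is parametrized by arc length on the
unit sphere when `p` and `v` are unit vectors with `⟪p, v⟫_ℂ = 0`; the scalars are complex, so that
`E` needs no separate real structure. -/
def greatCircle [NormedSpace ℂ E] (p v : E) (t : ℝ) : E :=
  (Real.cos t : ℂ) • p + (Real.sin t : ℂ) • v

section NormedSpace

variable [NormedSpace ℂ E]

theorem greatCircle_zero (p v : E) : greatCircle p v 0 = p := by simp [greatCircle]

theorem greatCircle_pi_div_two (p v : E) : greatCircle p v (Real.pi / 2) = v := by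
  simp [greatCircle]

theorem hasDerivAt_greatCircle (p v : E) (t : ℝ) :
    HasDerivAt (greatCircle p v) (greatCircle p v (t + Real.pi / 2)) t := by
  have hcos := (Real.hasDerivAt_cos t).ofReal_comp.smul_const p
  have hsin := (Real.hasDerivAt_sin t).ofReal_comp.smul_const v
  rw [greatCircle, Real.cos_add_pi_div_two, Real.sin_add_pi_div_two]
  exact hcos.add hsin

end NormedSpace

variable [InnerProductSpace ℂ E] {p v : E}

theorem norm_greatCircle (hp : ‖p‖ = 1) (hv : ‖v‖ = 1) (hpv : ⟪p, v⟫_ℂ = 0) (t : ℝ) :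
    ‖greatCircle p v t‖ = 1 :=
  norm_smul_add_smul_eq_one hp hv hpv (by
    rw [Complex.norm_real, Complex.norm_real, Real.norm_eq_abs, Real.norm_eq_abs, sq_abs, sq_abs,
      Real.cos_sq_add_sin_sq])

theorem inner_greatCircle_velocity (hp : ‖p‖ = 1) (hv : ‖v‖ = 1) (hpv : ⟪p, v⟫_ℂ = 0) (t : ℝ) :
    ⟪greatCircle p v t, greatCircle p v (t + Real.pi / 2)⟫_ℂ = 0 := by
  have hvp : ⟪v, p⟫_ℂ = 0 := inner_eq_zero_symm.1 hpv
  simp only [greatCircle, Real.cos_add_pi_div_two, Real.sin_add_pi_div_two, inner_add_left,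
    inner_add_right, inner_smul_left, inner_smul_right, hpv, hvp, inner_self_eq_norm_sq_to_K, hp,
    hv, Complex.conj_ofReal]
  push_cast
  ring

theorem norm_greatCircle_sub_le (hp : ‖p‖ = 1) (hv : ‖v‖ = 1) (hpv : ⟪p, v⟫_ℂ = 0) (t : ℝ) :
    ‖greatCircle p v t - p‖ ≤ |t| := by
  let _ := NormedSpace.restrictScalars ℝ ℂ E
  simpa [greatCircle_zero] using convex_univ.norm_image_sub_le_of_norm_hasDerivWithin_le
    (fun s _ ↦ (hasDerivAt_greatCircle p v s).hasDerivWithinAt)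
    (fun s _ ↦ (norm_greatCircle hp hv hpv (s + Real.pi / 2)).le) (Set.mem_univ 0) (Set.mem_univ t)

end GreatCircle

section TangentialDerivative

open Filter Metric Set Topology
open scoped InnerProductSpace

variable {E G : Type*} [NormedAddCommGroup E] [InnerProductSpace ℂ E] [NormedAddCommGroup G]

theorem hasDerivAt_comp_greatCircle [NormedSpace ℂ G] {f : E → G} {p v : E} {t : ℝ}
    (hf : DifferentiableAt ℂ f (greatCircle p v t)) :
    HasDerivAt (fun s ↦ f (greatCircle p v s))
      (fderiv ℂ f (greatCircle p v t) (greatCircle p v (t + Real.pi / 2))) t :=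
  (hf.hasFDerivAt.restrictScalars ℝ).comp_hasDerivAt t (hasDerivAt_greatCircle p v t)

theorem apply_greatCircle_eq [NormedSpace ℂ G] {f : E → G} {p v : E} {r t : ℝ}
    (hf : ∀ z ∈ ball p r, DifferentiableAt ℂ f z)
    (hT : ∀ z ∈ ball p r, ‖z‖ = 1 → ∀ w, ‖w‖ = 1 → ⟪z, w⟫_ℂ = 0 → fderiv ℂ f z w = 0)
    (hp : ‖p‖ = 1) (hv : ‖v‖ = 1) (hpv : ⟪p, v⟫_ℂ = 0) (ht : |t| < r) :
    f (greatCircle p v t) = f p := by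
  have hball : ∀ s ∈ ball (0 : ℝ) r, greatCircle p v s ∈ ball p r := fun s hs ↦
    mem_ball_iff_norm.2 ((norm_greatCircle_sub_le hp hv hpv s).trans_lt (by simpa using hs))
  have hderiv : ∀ s ∈ ball (0 : ℝ) r, HasDerivAt (fun s ↦ f (greatCircle p v s)) 0 s := by
    intro s hs
    have hzero := hT _ (hball s hs) (norm_greatCircle hp hv hpv s) _ (norm_greatCircle hp hv hpv _)
      (inner_greatCircle_velocity hp hv hpv s)
    exact hzero ▸ hasDerivAt_comp_greatCircle (hf _ (hball s hs))
  have hconst := isOpen_ball.is_const_of_deriv_eq_zero (convex_ball (0 : ℝ) r).isPreconnected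
    (fun s hs ↦ (hderiv s hs).differentiableAt.differentiableWithinAt)
    (fun s hs ↦ (hderiv s hs).deriv) (x := t) (y := 0) (by simpa using ht)
    (mem_ball_self ((abs_nonneg t).trans_lt ht))
  simpa only [greatCircle_zero] using hconst

theorem eventually_eq_of_fderiv_tangent_eq_zero [NormedSpace ℂ G] [CompleteSpace G] {f : E → G}
    {p v : E} {U : Set E} (hU : IsOpen U) (hf : DifferentiableOn ℂ f U)
    (hT : ∀ z ∈ U, ‖z‖ = 1 → ∀ w, ‖w‖ = 1 → ⟪z, w⟫_ℂ = 0 → fderiv ℂ f z w = 0)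
    (hpU : p ∈ U) (hp : ‖p‖ = 1) (hv : ‖v‖ = 1) (hpv : ⟪p, v⟫_ℂ = 0) :
    ∀ᶠ z in 𝓝 p, f z = f p := by
  obtain ⟨r, hr, hrU⟩ := Metric.isOpen_iff.1 hU p hpU
  have hplane : ∀ w, ‖w‖ = 1 → ⟪p, w⟫_ℂ = 0 →
      ∀ α ∈ ball (1 : ℂ) (r / 2), ∀ ζ ∈ ball (0 : ℂ) (r / 2), f (α • p + ζ • w) = f p := by
    intro w hw hpw
    refine eqOn_prod_of_eventually_cos_sin_eq (g := fun x ↦ f (x.1 • p + x.2 • w)) isOpen_ball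
      (convex_ball _ _).isPreconnected (mem_ball_self (half_pos hr)) isOpen_ball
      (convex_ball _ _).isPreconnected (mem_ball_self (half_pos hr))
      (hf.comp (by fun_prop) fun x hx ↦ hrU ?_) ?_
    · rw [mem_ball_iff_norm]
      have hα := mem_ball_iff_norm.1 hx.1
      have hζ := mem_ball_zero_iff.1 hx.2
      linarith [norm_smul_add_smul_sub_le hp hw x.1 x.2]
    · filter_upwards [ball_mem_nhds 0 hr] with t ht u hu
      have hcircle := apply_greatCircle_eq (v := u • w)
        (fun z hz ↦ hf.differentiableAt (hU.mem_nhds (hrU hz))) (fun z hz ↦ hT z (hrU hz)) hp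
        (by rw [norm_smul, hu, hw, one_mul]) (by rw [inner_smul_right, hpw, mul_zero])
        (by simpa using ht)
      rwa [greatCircle, smul_smul] at hcircle
  have hpp : ⟪p, p⟫_ℂ = 1 := by simp [hp]
  have hα : ∀ᶠ z in 𝓝 p, ⟪p, z⟫_ℂ ∈ ball (1 : ℂ) (r / 2) :=
    ContinuousAt.eventually_mem (by fun_prop) (by rw [hpp]; exact ball_mem_nhds 1 (half_pos hr))
  have hζ : ∀ᶠ z in 𝓝 p, ‖z - ⟪p, z⟫_ℂ • p‖ < r / 2 :=
    ContinuousAt.eventually_lt (by fun_prop) continuousAt_const (by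
      rw [hpp, one_smul, sub_self, norm_zero]
      exact half_pos hr)
  filter_upwards [hα, hζ] with z hzα hzζ
  obtain ⟨w, hw, hpw, hz⟩ := exists_norm_eq_one_and_eq_smul_add_smul hp hv hpv z
  rw [hz]
  exact hplane w hw hpw _ hzα _ (by simpa using hzζ)

variable [InnerProductSpace ℂ G]

theorem inner_fderiv_add_inner_fderiv_eq_zero {f g : E → G} {p v : E} {c : ℂ}
    (hf : DifferentiableAt ℂ f p) (hg : DifferentiableAt ℂ g p)
    (h : ∀ᶠ z in 𝓝 p, ‖z‖ = 1 → ⟪g z, f z⟫_ℂ = c) (hp : ‖p‖ = 1) (hv : ‖v‖ = 1)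
    (hpv : ⟪p, v⟫_ℂ = 0) : ⟪g p, fderiv ℂ f p v⟫_ℂ + ⟪fderiv ℂ g p v, f p⟫_ℂ = 0 := by
  have hcomp {k : E → G} (hk : DifferentiableAt ℂ k p) :
      HasDerivAt (fun t ↦ k (greatCircle p v t)) (fderiv ℂ k p v) 0 := by
    simpa only [greatCircle_zero, zero_add, greatCircle_pi_div_two] using
      hasDerivAt_comp_greatCircle (v := v) (t := 0) (by rwa [greatCircle_zero])
  have hconst : (fun t ↦ ⟪g (greatCircle p v t), f (greatCircle p v t)⟫_ℂ) =ᶠ[𝓝 0] fun _ ↦ c := by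
    have hcont := (hasDerivAt_greatCircle p v 0).continuousAt
    rw [ContinuousAt, greatCircle_zero] at hcont
    exact (hcont.eventually h).mono fun t ht ↦ ht (norm_greatCircle hp hv hpv t)
  simpa only [greatCircle_zero] using
    ((hcomp hg).inner ℂ (hcomp hf)).unique ((hasDerivAt_const 0 c).congr_of_eventuallyEq hconst)

-- The two terms of the real derivative are complex linear and antilinear in `v`, so replacing `v`
-- by `I • v` separates them.
theorem inner_fderiv_eq_zero {f g : E → G} {p v : E} {c : ℂ}
    (hf : DifferentiableAt ℂ f p) (hg : DifferentiableAt ℂ g p)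
    (h : ∀ᶠ z in 𝓝 p, ‖z‖ = 1 → ⟪g z, f z⟫_ℂ = c) (hp : ‖p‖ = 1) (hpv : ⟪p, v⟫_ℂ = 0) :
    ⟪g p, fderiv ℂ f p v⟫_ℂ = 0 := by
  have unit_case {w : E} (hw : ‖w‖ = 1) (hpw : ⟪p, w⟫_ℂ = 0) : ⟪g p, fderiv ℂ f p w⟫_ℂ = 0 := by
    have hone := inner_fderiv_add_inner_fderiv_eq_zero hf hg h hp hw hpw
    have hI := inner_fderiv_add_inner_fderiv_eq_zero hf hg h hp (v := Complex.I • w)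
      (by simp [norm_smul, hw]) (by simp [hpw])
    simp only [map_smul, inner_smul_left, inner_smul_right, Complex.conj_I] at hI
    have hdiff : ⟪g p, fderiv ℂ f p w⟫_ℂ = ⟪fderiv ℂ g p w, f p⟫_ℂ :=
      mul_left_cancel₀ Complex.I_ne_zero (by linear_combination hI)
    linear_combination (hone + hdiff) / 2
  rcases eq_or_ne v 0 with rfl | hv0
  · rw [map_zero, inner_zero_right]
  · have hnormalized := unit_case (norm_smul_inv_norm (𝕜 := ℂ) hv0)
      (by rw [inner_smul_right, hpv, mul_zero])
    simpa [inner_smul_right, hv0] using hnormalized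

theorem eventually_norm_sub_sub_le_of_mem_closedBall {E G : Type*} [NormedAddCommGroup E]
    [NormedSpace ℂ E] [NormedAddCommGroup G] [NormedSpace ℂ G] {f : E → G} {f' : E →L[ℂ] G} {p : E}
    (hf : HasFDerivAt f f' p) {η : ℝ} (hη : 0 < η) :
    ∀ᶠ r in 𝓝[>] (0 : ℝ), ∀ x ∈ closedBall p r, ∀ y ∈ closedBall p r,
      ‖f x - f y - f' (x - y)‖ ≤ η * r := by
  obtain ⟨δ, hδ, hfδ⟩ := Metric.eventually_nhds_iff_ball.1 (hf.isLittleO.def (half_pos hη))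
  filter_upwards [Ioo_mem_nhdsGT hδ] with r hr x hx y hy
  have hcenter : ∀ z ∈ closedBall p r, ‖f z - f p - f' (z - p)‖ ≤ η / 2 * r := fun z hz ↦
    (hfδ z (closedBall_subset_ball hr.2 hz)).trans
      (mul_le_mul_of_nonneg_left (mem_closedBall_iff_norm.1 hz) (half_pos hη).le)
  calc ‖f x - f y - f' (x - y)‖
      = ‖(f x - f p - f' (x - p)) - (f y - f p - f' (y - p))‖ := by
        congr 1
        simp only [map_sub]
        abel
    _ ≤ η / 2 * r + η / 2 * r := norm_sub_le_of_le (hcenter x hx) (hcenter y hy)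
    _ = η * r := by ring

theorem norm_ofReal_sub_one_le_of_sq_add_sq_eq_one {a b : ℝ} (ha : 0 ≤ a) (hb : 0 ≤ b)
    (hab : a ^ 2 + b ^ 2 = 1) : ‖(a : ℂ) - 1‖ ≤ b := by
  rw [← Complex.ofReal_one, ← Complex.ofReal_sub, Complex.norm_real, Real.norm_eq_abs, abs_le]
  constructor <;> nlinarith

-- The circles `ζ ↦ a • p + ζ • v` and `ζ ↦ a • p + ζ • w` with `‖ζ‖ = b` lie on the unit sphere
-- and share their center, so the maximum principle compares `f` on the two discs they bound.
theorem exists_norm_sub_le_norm_sub_of_norm_eq {f : E → G} {p v w : E} {U : Set E} {M a b : ℝ}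
    (hf : DifferentiableOn ℂ f U) (hM : ∀ z ∈ U, ‖z‖ = 1 → ‖f z‖ = M) (hp : ‖p‖ = 1)
    (hv : ‖v‖ = 1) (hpv : ⟪p, v⟫_ℂ = 0) (hw : ‖w‖ = 1) (hpw : ⟪p, w⟫_ℂ = 0) (ha : 0 ≤ a)
    (hb : 0 < b) (hab : a ^ 2 + b ^ 2 = 1) (hbU : closedBall p (2 * b) ⊆ U) :
    ∃ ζ ∈ sphere (0 : ℂ) b, ∃ ξ ∈ sphere (0 : ℂ) b,
      ‖f ((a : ℂ) • p + ζ • v) - f ((a : ℂ) • p)‖ ≤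
        ‖f ((a : ℂ) • p + ξ • w) - f ((a : ℂ) • p)‖ := by
  have disc_subset {u : E} (hu : ‖u‖ = 1) :
      MapsTo (fun ζ : ℂ ↦ (a : ℂ) • p + ζ • u) (closedBall 0 b) U :=
    (mapsTo_smul_add_smul_closedBall hp hu
      (norm_ofReal_sub_one_le_of_sq_add_sq_eq_one ha hb.le hab)).mono_right hbU
  have disc_diffContOnCl {u : E} (hu : ‖u‖ = 1) :
      DiffContOnCl ℂ (fun ζ : ℂ ↦ f ((a : ℂ) • p + ζ • u)) (ball 0 b) := by
    refine DifferentiableOn.diffContOnCl (hf.comp (by fun_prop) ?_)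
    rw [closure_ball _ hb.ne']
    exact disc_subset hu
  have circle_norm {u : E} (hu : ‖u‖ = 1) (hpu : ⟪p, u⟫_ℂ = 0) :
      ∀ ζ ∈ sphere (0 : ℂ) b, ‖f ((a : ℂ) • p + ζ • u)‖ = M := by
    intro ζ hζ
    refine hM _ (disc_subset hu (sphere_subset_closedBall hζ))
      (norm_smul_add_smul_eq_one hp hu hpu ?_)
    rw [mem_sphere_zero_iff_norm.1 hζ, Complex.norm_real, Real.norm_eq_abs, sq_abs, hab]
  simpa only [zero_smul, add_zero] using exists_norm_sub_center_le_norm_sub_center hb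
    (disc_diffContOnCl hv) (disc_diffContOnCl hw) (circle_norm hv hpv) (circle_norm hw hpw)
    (by simp only [zero_smul])

theorem norm_fderiv_le_norm_fderiv {f : E → G} {p v w : E} {U : Set E} {M : ℝ} (hU : IsOpen U)
    (hf : DifferentiableOn ℂ f U) (hM : ∀ z ∈ U, ‖z‖ = 1 → ‖f z‖ = M) (hpU : p ∈ U) (hp : ‖p‖ = 1)
    (hv : ‖v‖ = 1) (hpv : ⟪p, v⟫_ℂ = 0) (hw : ‖w‖ = 1) (hpw : ⟪p, w⟫_ℂ = 0) :
    ‖fderiv ℂ f p v‖ ≤ ‖fderiv ℂ f p w‖ := by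
  refine le_of_forall_pos_le_add fun η hη ↦ ?_
  have hunit : ∀ᶠ r in 𝓝[>] (0 : ℝ), r ∈ Ioo 0 1 := Ioo_mem_nhdsGT one_pos
  have hball : ∀ᶠ r in 𝓝[>] (0 : ℝ), closedBall p r ⊆ U :=
    nhdsWithin_le_nhds (eventually_closedBall_subset (hU.mem_nhds hpU))
  have hlinear := eventually_norm_sub_sub_le_of_mem_closedBall
    (hf.differentiableAt (hU.mem_nhds hpU)).hasFDerivAt (show 0 < η / 4 by positivity)
  obtain ⟨r, ⟨hr0, hr1⟩, hrU, hlin⟩ := (hunit.and (hball.and hlinear)).exists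
  obtain ⟨b, rfl⟩ : ∃ b, r = 2 * b := ⟨r / 2, by ring⟩
  have hb : 0 < b := by linarith
  let a : ℝ := √(1 - b ^ 2)
  have ha : 0 ≤ a := Real.sqrt_nonneg _
  have hab : a ^ 2 + b ^ 2 = 1 := by rw [Real.sq_sqrt (by nlinarith), sub_add_cancel]
  have disc_linear {u : E} (hu : ‖u‖ = 1) {ζ : ℂ} (hζ : ζ ∈ sphere 0 b) :
      |‖f ((a : ℂ) • p + ζ • u) - f ((a : ℂ) • p)‖ - b * ‖fderiv ℂ f p u‖| ≤ η / 2 * b := by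
    have hmaps := mapsTo_smul_add_smul_closedBall hp hu
      (norm_ofReal_sub_one_le_of_sq_add_sq_eq_one ha hb.le hab)
    have happrox := hlin _ (hmaps (sphere_subset_closedBall hζ)) _
      (hmaps (mem_closedBall_self hb.le))
    simp only [zero_smul, add_zero, add_sub_cancel_left, map_smul] at happrox
    rw [← mem_sphere_zero_iff_norm.1 hζ, ← norm_smul, mem_sphere_zero_iff_norm.1 hζ]
    exact (abs_norm_sub_norm_le _ _).trans (by linarith)
  obtain ⟨ζ, hζ, ξ, hξ, hle⟩ := exists_norm_sub_le_norm_sub_of_norm_eq hf hM hp hv hpv hw hpw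
    ha hb hab hrU
  have hvζ := abs_le.1 (disc_linear hv hζ)
  have hwξ := abs_le.1 (disc_linear hw hξ)
  exact le_of_mul_le_mul_left (by linarith) hb

end TangentialDerivative

section OrthonormalFrames

open Metric Set
open scoped InnerProductSpace

variable {E G ι : Type*} [NormedAddCommGroup E] [InnerProductSpace ℂ E] [FiniteDimensional ℂ E]
  [NormedAddCommGroup G] [InnerProductSpace ℂ G] [FiniteDimensional ℂ G] [Fintype ι]

theorem exists_unit_tangent_map_eq_zero {p : E} (hp : p ≠ 0) (L : E →ₗ[ℂ] G) {e : ι → G}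
    (he : LinearIndependent ℂ e)
    (hdim : Module.finrank ℂ G + 1 < Module.finrank ℂ E + Fintype.card ι)
    (hL : ∀ v, ⟪p, v⟫_ℂ = 0 → ∀ i, ⟪e i, L v⟫_ℂ = 0) :
    ∃ v, ‖v‖ = 1 ∧ ⟪p, v⟫_ℂ = 0 ∧ L v = 0 := by
  let S : Submodule ℂ G := Submodule.span ℂ (range e)
  have maps_orthogonal : ∀ v ∈ (ℂ ∙ p)ᗮ, L v ∈ Sᗮ := by
    intro v hv
    have hspan : S ≤ (ℂ ∙ L v)ᗮ := Submodule.span_le.2 <| forall_mem_range.2 fun i ↦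
      Submodule.mem_orthogonal_singleton_iff_inner_left.2
        (hL v (Submodule.mem_orthogonal_singleton_iff_inner_right.1 hv) i)
    exact (S.mem_orthogonal (L v)).2 fun y hy ↦
      Submodule.mem_orthogonal_singleton_iff_inner_left.1 (hspan hy)
  have hlt : Module.finrank ℂ Sᗮ < Module.finrank ℂ (ℂ ∙ p)ᗮ := by
    have hS : Module.finrank ℂ S = Fintype.card ι := finrank_span_eq_card he
    have hp1 : Module.finrank ℂ (ℂ ∙ p) = 1 := finrank_span_singleton hp
    have hSsum := S.finrank_add_finrank_orthogonal
    have hpsum := (ℂ ∙ p).finrank_add_finrank_orthogonal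
    omega
  obtain ⟨v, hvL, hv0⟩ := Submodule.exists_mem_ne_zero_of_ne_bot
    (LinearMap.ker_ne_bot_of_finrank_lt (f := L.restrict maps_orthogonal) hlt)
  have hLv : L v = 0 := congrArg Subtype.val (LinearMap.mem_ker.1 hvL)
  have hpv : ⟪p, (v : E)⟫_ℂ = 0 := Submodule.mem_orthogonal_singleton_iff_inner_right.1 v.2
  exact ⟨(‖(v : E)‖ : ℂ)⁻¹ • (v : E), norm_smul_inv_norm (by simpa using hv0),
    by rw [inner_smul_right, hpv, mul_zero], by rw [map_smul, hLv, smul_zero]⟩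

theorem constancy_small_codim_shilov_general
    (hdim : Module.finrank ℂ G + 1 < Module.finrank ℂ E + Fintype.card ι)
    {U : Set E} (hU : IsOpen U) (hUc : IsPreconnected U) (hmeets : ∃ z ∈ U, ‖z‖ = 1)
    {f : ι → E → G} (hf : ∀ i, DifferentiableOn ℂ (f i) U)
    (horth : ∀ z ∈ U, ‖z‖ = 1 → Orthonormal ℂ fun i ↦ f i z) :
    ∀ i, ∀ z ∈ U, ∀ w ∈ U, f i z = f i w := by
  classical
  intro i
  have exists_kernel : ∀ z ∈ U, ‖z‖ = 1 →
      ∃ v, ‖v‖ = 1 ∧ ⟪z, v⟫_ℂ = 0 ∧ fderiv ℂ (f i) z v = 0 := by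
    intro z hzU hz
    have hdiff j := (hf j).differentiableAt (hU.mem_nhds hzU)
    refine exists_unit_tangent_map_eq_zero (norm_ne_zero_iff.1 (hz ▸ one_ne_zero))
      (fderiv ℂ (f i) z : E →ₗ[ℂ] G) (horth z hzU hz).linearIndependent hdim fun v hzv j ↦ ?_
    refine inner_fderiv_eq_zero (c := if j = i then 1 else 0) (hdiff i) (hdiff j) ?_ hz hzv
    filter_upwards [hU.mem_nhds hzU] with x hxU hx
    exact orthonormal_iff_ite.1 (horth x hxU hx) j i
  have tangent_zero : ∀ z ∈ U, ‖z‖ = 1 → ∀ w, ‖w‖ = 1 → ⟪z, w⟫_ℂ = 0 →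
      fderiv ℂ (f i) z w = 0 := by
    intro z hzU hz w hw hzw
    obtain ⟨v, hv, hzv, hker⟩ := exists_kernel z hzU hz
    have hle := norm_fderiv_le_norm_fderiv hU (hf i) (fun x hxU hx ↦ (horth x hxU hx).1 i) hzU hz
      hw hzw hv hzv
    rwa [hker, norm_zero, norm_le_zero_iff] at hle
  obtain ⟨p, hpU, hp⟩ := hmeets
  obtain ⟨v, hv, hpv, -⟩ := exists_kernel p hpU hp
  have : CompleteSpace G := FiniteDimensional.complete ℂ G
  have hconst : EqOn (f i) (fun _ ↦ f i p) U :=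
    eqOn_of_isPreconnected_of_eventuallyEq hU hUc (hf i) (differentiableOn_const _) hpU
      (eventually_eq_of_fderiv_tangent_eq_zero hU (hf i) tangent_zero hpU hp hv hpv)
  exact fun z hz w hw ↦ (hconst hz).trans (hconst hw).symm

end OrthonormalFrames

section Coordinates

open scoped InnerProductSpace

theorem cdot_eq_inner {n : ℕ} (z w : Fin n → ℂ) :
    cdot z w = ⟪(WithLp.toLp 2 w : EuclideanSpace ℂ (Fin n)), WithLp.toLp 2 z⟫_ℂ :=
  (EuclideanSpace.inner_toLp_toLp w z).symm

theorem cdot_self_eq_one_iff {n : ℕ} (z : Fin n → ℂ) :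
    cdot z z = 1 ↔ ‖(WithLp.toLp 2 z : EuclideanSpace ℂ (Fin n))‖ = 1 := by
  rw [cdot_eq_inner, inner_self_eq_norm_sq_to_K]
  change ((‖(WithLp.toLp 2 z : EuclideanSpace ℂ (Fin n))‖ : ℝ) : ℂ) ^ 2 = 1 ↔ _
  norm_cast
  exact pow_eq_one_iff_of_nonneg (norm_nonneg _) two_ne_zero

theorem orthonormal_toLp_of_mul_conjTranspose_eq_one {m n : Type*}
    [DecidableEq m] [Fintype n] {A : Matrix m n ℂ} (hA : A * Aᴴ = 1) :
    Orthonormal ℂ fun i ↦ (WithLp.toLp 2 (A i) : EuclideanSpace ℂ n) := by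
  rw [orthonormal_iff_ite]
  intro i j
  rw [EuclideanSpace.inner_toLp_toLp]
  have h : A j ⬝ᵥ star (A i) = (A * Aᴴ) j i := rfl
  simp only [h, hA, Matrix.one_apply, eq_comm]

end Coordinates

/-- Let `s ≥ 2` and `2 ≤ r' ≤ s'` with `s' − r' < s − 1`.  Let `U ⊆ ℂ^s`
be open, connected, meeting the unit sphere `S(Ω_{1,s})`, and let `F : U → ℂ^{r'×s'}` be
holomorphic with `F(z)·F(z)ᴴ = I_{r'}` for every `z ∈ U ∩ S(Ω_{1,s})`.  Then `F` is
constant on `U`. -/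
theorem constancy_small_codim_shilov
    (s r' s' : ℕ) (hs : 2 ≤ s) (hr' : 2 ≤ r') (hr's' : r' ≤ s')
    (hcodim : (s' : ℤ) - (r' : ℤ) < (s : ℤ) - 1)
    (U : Set (Fin s → ℂ)) (hopen : IsOpen U) (hconn : IsPreconnected U)
    (hmeets : ∃ z ∈ U, cdot z z = 1)
    (F : (Fin s → ℂ) → Fin r' → Fin s' → ℂ)
    (hF : DifferentiableOn ℂ F U)
    (hshilov : ∀ z ∈ U, cdot z z = 1 →
      Matrix.of (F z) * (Matrix.of (F z))ᴴ = (1 : Matrix (Fin r') (Fin r') ℂ)) :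
    ∀ z ∈ U, ∀ w ∈ U, F z = F w := by
  let e := EuclideanSpace.equiv (Fin s) ℂ
  let e' := EuclideanSpace.equiv (Fin s') ℂ
  have hdim : Module.finrank ℂ (EuclideanSpace ℂ (Fin s')) + 1
      < Module.finrank ℂ (EuclideanSpace ℂ (Fin s)) + Fintype.card (Fin r') := by
    simp only [finrank_euclideanSpace, Fintype.card_fin]
    omega
  have hconn' : IsPreconnected (e ⁻¹' U) :=
    e.toHomeomorph.isPreconnected_preimage.2 hconn
  have hF' : ∀ i, DifferentiableOn ℂ (fun x ↦ e'.symm (F (e x) i)) (e ⁻¹' U) := fun i ↦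
    e'.symm.differentiable.comp_differentiableOn
      (differentiableOn_pi.1 (hF.comp e.differentiableOn fun x hx ↦ hx) i)
  obtain ⟨p, hpU, hp⟩ := hmeets
  have hconst := constancy_small_codim_shilov_general hdim (hopen.preimage e.continuous) hconn'
    ⟨e.symm p, by simpa using hpU, (cdot_self_eq_one_iff p).1 hp⟩ hF' fun z hz hz1 ↦
      orthonormal_toLp_of_mul_conjTranspose_eq_one
        (hshilov (e z) hz ((cdot_self_eq_one_iff (e z)).2 hz1))
  exact fun z hz w hw ↦ funext fun i ↦
    e'.symm.injective (hconst i (e.symm z) (by simpa using hz) (e.symm w) (by simpa using hw))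
end
end

section
/- Let r, s, r', s' be positive integers with r ≤ s and r' ≤ s'. Let U ⊆ ℂ^{r×s} be a connected open set containing a point Z₀ with Z₀·Z₀ᴴ = I_r, and let F : U → ℂ^{r'×s'} be a holomorphic map such that F(Z)·F(Z)ᴴ = I_{r'} for every Z ∈ U with Z·Zᴴ = I_r. Then there exists an open connected set U' ⊆ U containing a point Z₁ with Z₁·Z₁ᴴ = I_r such that for all Z, W ∈ U' with Z·Wᴴ = I_r one has F(Z)·F(W)ᴴ = I_{r'}; i.e. F restricted to U' is an orthogonal map. -/
open scoped BigOperators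
open Matrix

noncomputable section

/-!
The unitary group is a maximal totally real subset of the complex matrices near `1`: a holomorphic
function near `1` that is constant on unitary matrices is constant (exponential coordinates reduce
this to the identity theorem on a line `t ↦ ℜ X + t ℑ X`). Since `Z₀ u` is a null point for unitary
`u`, this applies to `g ↦ F (Z₀ g) F (Z₀ (gᴴ)⁻¹)ᴴ`. Every orthogonal pair `(Z, W)` close to
`(Z₀, Z₀)` has the form `(Z₀ g, Z₀ (gᴴ)⁻¹)` with `g` close to `1`.
-/

open Filter Topology Complex ComplexStarModule

section UniquenessSets

variable {E : Type*} [NormedAddCommGroup E] [NormedSpace ℂ E] [CompleteSpace E]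

theorem eqOn_of_frequently_eq_ofReal {f g : ℂ → E} {U : Set ℂ} (hU : IsOpen U)
    (hU' : IsPreconnected U) (hf : DifferentiableOn ℂ f U) (hg : DifferentiableOn ℂ g U) {x : ℝ}
    (hx : (x : ℂ) ∈ U) (hfg : ∃ᶠ t : ℝ in 𝓝[≠] x, f t = g t) : Set.EqOn f g U := by
  have ofReal_tendsto : Tendsto ofReal (𝓝[≠] x) (𝓝[≠] (x : ℂ)) :=
    continuous_ofReal.continuousWithinAt.tendsto_nhdsWithin fun _ ht ↦ ofReal_injective.ne ht
  exact (hf.analyticOnNhd hU).eqOn_of_preconnected_of_frequently_eq (hg.analyticOnNhd hU) hU' hx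
    (ofReal_tendsto.frequently hfg)

theorem eventuallyEq_of_eventually_isSelfAdjoint_imp_eq {V : Type*} [NormedAddCommGroup V]
    [NormedSpace ℂ V] [StarAddMonoid V] [StarModule ℂ V] [ContinuousStar V] {f g : V → E} {a : V}
    (ha : IsSelfAdjoint a) (hf : ∀ᶠ x in 𝓝 a, DifferentiableAt ℂ f x)
    (hg : ∀ᶠ x in 𝓝 a, DifferentiableAt ℂ g x)
    (hfg : ∀ᶠ x in 𝓝 a, IsSelfAdjoint x → f x = g x) : f =ᶠ[𝓝 a] g := by
  let line (x : V) (t : ℂ) : V := ℜ x + t • (ℑ x : V)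
  have line_I (x : V) : line x I = x := realPart_add_I_smul_imaginaryPart x
  have line_self (t : ℂ) : line a t = a := by simp [line, ha.coe_realPart, ha.imaginaryPart]
  have line_continuous : Continuous fun p : V × ℂ ↦ line p.1 p.2 := by
    simp only [line, realPart_apply_coe, imaginaryPart_apply_coe]
    fun_prop
  have line_isSelfAdjoint (x : V) (t : ℝ) : IsSelfAdjoint (line x t) :=
    (ℜ x).2.add (IsSelfAdjoint.smul (conj_ofReal t) (ℑ x).2)
  have line_differentiable (x : V) : Differentiable ℂ (line x) := by fun_prop
  have eventually_line : ∀ᶠ x in 𝓝 a, ∀ t ∈ Metric.closedBall (0 : ℂ) 2,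
      DifferentiableAt ℂ f (line x t) ∧ DifferentiableAt ℂ g (line x t) ∧
        (IsSelfAdjoint (line x t) → f (line x t) = g (line x t)) :=
    (isCompact_closedBall 0 2).eventually_forall_of_forall_eventually fun t _ ↦
      (line_continuous.tendsto' (a, t) a (line_self t)).eventually (hf.and (hg.and hfg))
  filter_upwards [eventually_line] with x hx
  replace hx := fun t ht ↦ hx t (Metric.ball_subset_closedBall ht)
  have hfg_real : ∀ᶠ t : ℝ in 𝓝 0, f (line x t) = g (line x t) := by
    filter_upwards [continuous_ofReal.tendsto' 0 0 ofReal_zero (Metric.ball_mem_nhds _ two_pos)]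
      with t ht using (hx t ht).2.2 (line_isSelfAdjoint x t)
  have hfg_ball : Set.EqOn (f ∘ line x) (g ∘ line x) (Metric.ball 0 2) :=
    eqOn_of_frequently_eq_ofReal Metric.isOpen_ball (convex_ball _ _).isPreconnected
      (fun t ht ↦ ((hx t ht).1.comp t (line_differentiable x t)).differentiableWithinAt)
      (fun t ht ↦ ((hx t ht).2.1.comp t (line_differentiable x t)).differentiableWithinAt)
      (x := 0) (by simp) (hfg_real.filter_mono nhdsWithin_le_nhds).frequently
  simpa [line_I] using hfg_ball (x := I) (by simp)

variable {A : Type*} [NormedRing A] [NormedAlgebra ℂ A] [CompleteSpace A]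

theorem map_exp_I_smul_nhds_zero : map (fun x : A ↦ NormedSpace.exp (I • x)) (𝓝 0) = 𝓝 1 := by
  have map_exp : map (NormedSpace.exp : A → A) (𝓝 0) = 𝓝 (NormedSpace.exp 0) :=
    (hasStrictFDerivAt_exp_zero (𝕂 := ℂ) (𝔸 := A)).map_nhds_eq_of_equiv
      (f' := ContinuousLinearEquiv.refl ℂ A)
  have map_smul : map (I • · : A → A) (𝓝 0) = 𝓝 0 := by
    simpa using (Homeomorph.smulOfNeZero (α := A) I I_ne_zero).map_nhds_eq 0
  calc map (fun x : A ↦ NormedSpace.exp (I • x)) (𝓝 0)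
      = map NormedSpace.exp (map (I • ·) (𝓝 0)) := Filter.map_map.symm
    _ = 𝓝 1 := by rw [map_smul, map_exp, NormedSpace.exp_zero]

theorem eventuallyEq_of_eventually_mem_unitary_imp_eq [StarRing A] [StarModule ℂ A]
    [ContinuousStar A] {f g : A → E} (hf : ∀ᶠ x in 𝓝 1, DifferentiableAt ℂ f x)
    (hg : ∀ᶠ x in 𝓝 1, DifferentiableAt ℂ g x)
    (hfg : ∀ᶠ u in 𝓝 1, u ∈ unitary A → f u = g u) : f =ᶠ[𝓝 1] g := by
  have exp_differentiable : Differentiable ℂ fun x : A ↦ NormedSpace.exp (I • x) := fun x ↦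
    (NormedSpace.exp_analytic (𝕂 := ℂ) _).differentiableAt.comp x (by fun_prop)
  rw [EventuallyEq, ← map_exp_I_smul_nhds_zero, eventually_map] at *
  refine eventuallyEq_of_eventually_isSelfAdjoint_imp_eq (.zero A)
    (hf.mono fun x hx ↦ hx.comp x (exp_differentiable x))
    (hg.mono fun x hx ↦ hx.comp x (exp_differentiable x)) ?_
  filter_upwards [hfg] with x hx hx_selfAdjoint
    using hx (selfAdjoint.expUnitary ⟨x, hx_selfAdjoint⟩).2

end UniquenessSets

section Transport

variable {m n R : Type*} [Fintype m] [Fintype n] [DecidableEq n] [Ring R] [StarRing R]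

/-- The matrix `g` moving a null point `A` to an orthogonal pair `(Z, W)` close to it, in the sense
that `A * g = Z` and `W * gᴴ = A`. The second summand only serves to make `g` invertible: it
completes `Aᴴ * Z`, of rank at most that of `A`, to the matrix `1` at `Z = W = A`. -/
def transport (A Z W : Matrix m n R) : Matrix n n R :=
  Aᴴ * Z + (1 - Aᴴ * A) * (1 - Wᴴ * Z)

theorem continuous_transport [TopologicalSpace R] [IsTopologicalRing R] [ContinuousStar R]
    (A : Matrix m n R) :
    Continuous fun p : Matrix m n R × Matrix m n R ↦ transport A p.1 p.2 := by
  unfold transport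
  fun_prop

variable [DecidableEq m] {A Z W : Matrix m n R}

theorem transport_self (hA : A * Aᴴ = 1) : transport A A A = 1 := by
  have annihilates : Aᴴ * A * (1 - Aᴴ * A) = 0 := by
    rw [mul_sub, mul_one, Matrix.mul_assoc, ← Matrix.mul_assoc A, hA, Matrix.one_mul, sub_self]
  rw [transport, sub_mul, annihilates, one_mul, sub_zero, add_sub_cancel]

theorem mul_transport (hA : A * Aᴴ = 1) : A * transport A Z W = Z := by
  have annihilates : A * (1 - Aᴴ * A) = 0 := by
    rw [Matrix.mul_sub, ← Matrix.mul_assoc, hA, Matrix.mul_one, Matrix.one_mul, sub_self]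
  rw [transport, Matrix.mul_add, ← Matrix.mul_assoc, ← Matrix.mul_assoc, annihilates, hA,
    Matrix.one_mul, Matrix.zero_mul, add_zero]

theorem mul_conjTranspose_transport (hZW : Z * Wᴴ = 1) : W * (transport A Z W)ᴴ = A := by
  have annihilates : (1 - Wᴴ * Z) * Wᴴ = 0 := by
    rw [Matrix.sub_mul, Matrix.mul_assoc, hZW, Matrix.mul_one, Matrix.one_mul, sub_self]
  have transport_mul : transport A Z W * Wᴴ = Aᴴ := by
    rw [transport, Matrix.add_mul, Matrix.mul_assoc, Matrix.mul_assoc, annihilates, hZW,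
      Matrix.mul_one, Matrix.mul_zero, add_zero]
  simpa only [conjTranspose_mul, conjTranspose_conjTranspose] using
    congrArg conjTranspose transport_mul

end Transport

theorem exists_isOpen_isPreconnected_forall_of_eventually {X : Type*} [TopologicalSpace X]
    [LocallyConnectedSpace X] {x : X} {U : Set X} {P : X × X → Prop} (hU : U ∈ 𝓝 x)
    (hP : ∀ᶠ p in 𝓝 (x, x), P p) :
    ∃ V ⊆ U, IsOpen V ∧ IsPreconnected V ∧ x ∈ V ∧ ∀ y ∈ V, ∀ z ∈ V, P (y, z) := by
  obtain ⟨W, hW_open, hxW, hW⟩ := exists_nhds_square hP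
  obtain ⟨V, hVUW, hV_open, hxV, hV_conn⟩ :=
    locallyConnectedSpace_iff_subsets_isOpen_isConnected.1 ‹_› x _
      (inter_mem hU (hW_open.mem_nhds hxW))
  exact ⟨V, fun y hy ↦ (hVUW hy).1, hV_open, hV_conn.isPreconnected, hxV,
    fun y hy z hz ↦ hW ⟨(hVUW hy).2, (hVUW hz).2⟩⟩

section NullPreserving

theorem differentiableAt_mul_conjTranspose_comp_star {V l p q : Type*} [NormedAddCommGroup V]
    [NormedSpace ℂ V] [StarAddMonoid V] [StarModule ℂ V] [ContinuousStar V] [Finite l] [Finite p]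
    [Fintype q] {G : V → Matrix l q ℂ} {H : V → Matrix p q ℂ} {x : V}
    (hG : DifferentiableAt ℂ G x) (hH : DifferentiableAt ℂ H (star x)) :
    DifferentiableAt ℂ (fun y ↦ G y * (H (star y))ᴴ) x := by
  cases nonempty_fintype l
  cases nonempty_fintype p
  refine differentiableAt_pi.2 fun i ↦ differentiableAt_pi.2 fun j ↦ ?_
  simp only [Matrix.mul_apply, conjTranspose_apply]
  refine .fun_sum fun k _ ↦ .mul ?_ ?_
  · exact differentiableAt_pi.1 (differentiableAt_pi.1 hG i) k
  · have hH_apply : DifferentiableAt ℂ (fun y ↦ H y j k) (star x) :=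
      differentiableAt_pi.1 (differentiableAt_pi.1 hH j) k
    simpa using! hH_apply.star_star

open scoped Matrix.Norms.L2Operator in
theorem differentiableAt_matrix_inv {n : Type*} [Fintype n] [DecidableEq n] {M : Matrix n n ℂ}
    (hM : IsUnit M) : DifferentiableAt ℂ (fun N : Matrix n n ℂ ↦ N⁻¹) M := by
  simpa only [nonsing_inv_eq_ringInverse] using differentiableAt_inverse hM

theorem mul_unitary_mul_conjTranspose {m n R : Type*} [Fintype n] [DecidableEq n] [Ring R]
    [StarRing R] (A : Matrix m n R) {u : Matrix n n R} (hu : u ∈ unitary (Matrix n n R)) :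
    A * u * (A * u)ᴴ = A * Aᴴ := by
  rw [conjTranspose_mul, Matrix.mul_assoc, ← Matrix.mul_assoc u, ← star_eq_conjTranspose u,
    Unitary.mul_star_self_of_mem hu, Matrix.one_mul]

variable {m n m' n' : Type*} [Finite m] [Fintype n] [Finite m'] [Fintype n'] [DecidableEq m]
  [DecidableEq m'] {F : Matrix m n ℂ → Matrix m' n' ℂ} {Z₀ : Matrix m n ℂ}

open scoped Matrix.Norms.L2Operator in
theorem eventually_map_mul_map_mul_inv_conjTranspose_eq_one [DecidableEq n] (hZ₀ : Z₀ * Z₀ᴴ = 1)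
    (hF : ∀ᶠ Z in 𝓝 Z₀, DifferentiableAt ℂ F Z)
    (hnull : ∀ᶠ Z in 𝓝 Z₀, Z * Zᴴ = 1 → F Z * (F Z)ᴴ = 1) :
    ∀ᶠ g : Matrix n n ℂ in 𝓝 1, F (Z₀ * g) * (F (Z₀ * (gᴴ)⁻¹))ᴴ = 1 := by
  classical
  cases nonempty_fintype m
  cases nonempty_fintype m'
  have mul_differentiable : Differentiable ℂ fun g : Matrix n n ℂ ↦ Z₀ * g :=
    (mulLeftLinearMap n ℂ Z₀).toContinuousLinearMap.differentiable
  have mul_tendsto : Tendsto (fun g : Matrix n n ℂ ↦ Z₀ * g) (𝓝 1) (𝓝 Z₀) :=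
    mul_differentiable.continuous.tendsto' 1 Z₀ (Matrix.mul_one Z₀)
  have inv_tendsto : Tendsto (fun g : Matrix n n ℂ ↦ g⁻¹) (𝓝 1) (𝓝 1) := by
    simpa only [inv_one] using
      (differentiableAt_matrix_inv (M := (1 : Matrix n n ℂ)) isUnit_one).continuousAt.tendsto
  have star_tendsto : Tendsto (star : Matrix n n ℂ → Matrix n n ℂ) (𝓝 1) (𝓝 1) :=
    continuous_star.tendsto' 1 1 (star_one _)
  have hF_mul : ∀ᶠ g : Matrix n n ℂ in 𝓝 1, DifferentiableAt ℂ (fun h ↦ F (Z₀ * h)) g := by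
    filter_upwards [mul_tendsto.eventually hF] with g hg using hg.comp g (mul_differentiable g)
  have hF_mul_inv : ∀ᶠ g : Matrix n n ℂ in 𝓝 1, DifferentiableAt ℂ (fun h ↦ F (Z₀ * h⁻¹)) g := by
    filter_upwards [inv_tendsto.eventually hF_mul, Units.isOpen.mem_nhds isUnit_one] with g hg hunit
      using hg.comp g (differentiableAt_matrix_inv hunit)
  refine eventuallyEq_of_eventually_mem_unitary_imp_eq (A := Matrix n n ℂ) ?_
    (.of_forall fun _ ↦ differentiableAt_const (1 : Matrix m' m' ℂ)) ?_
  · filter_upwards [hF_mul, star_tendsto.eventually hF_mul_inv] with g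
      using differentiableAt_mul_conjTranspose_comp_star
  · filter_upwards [mul_tendsto.eventually hnull] with u hnull_u hu
    rw [← star_eq_conjTranspose u, Matrix.inv_eq_left_inv (Unitary.mul_star_self_of_mem hu)]
    exact hnull_u ((mul_unitary_mul_conjTranspose Z₀ hu).trans hZ₀)

theorem eventually_orthogonal_imp_map_orthogonal (hZ₀ : Z₀ * Z₀ᴴ = 1)
    (hF : ∀ᶠ Z in 𝓝 Z₀, DifferentiableAt ℂ F Z)
    (hnull : ∀ᶠ Z in 𝓝 Z₀, Z * Zᴴ = 1 → F Z * (F Z)ᴴ = 1) :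
    ∀ᶠ p : Matrix m n ℂ × Matrix m n ℂ in 𝓝 (Z₀, Z₀),
      p.1 * p.2ᴴ = 1 → F p.1 * (F p.2)ᴴ = 1 := by
  classical
  cases nonempty_fintype m
  have transport_tendsto : Tendsto (fun p : Matrix m n ℂ × Matrix m n ℂ ↦ transport Z₀ p.1 p.2)
      (𝓝 (Z₀, Z₀)) (𝓝 1) :=
    (continuous_transport Z₀).tendsto' _ _ (transport_self hZ₀)
  have eventually_det_ne_zero : ∀ᶠ g : Matrix n n ℂ in 𝓝 1, gᴴ.det ≠ 0 :=
    (Continuous.matrix_det (by fun_prop)).continuousAt.eventually_ne (by simp)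
  filter_upwards [transport_tendsto.eventually (eventually_det_ne_zero.and
    (eventually_map_mul_map_mul_inv_conjTranspose_eq_one hZ₀ hF hnull))]
    with ⟨Z, W⟩ ⟨hdet, hF_transport⟩ hZW
  have hW : Z₀ * ((transport Z₀ Z W)ᴴ)⁻¹ = W := by
    nth_rewrite 1 [← mul_conjTranspose_transport (A := Z₀) hZW]
    exact mul_nonsing_inv_cancel_right _ _ hdet.isUnit
  rwa [mul_transport hZ₀, hW] at hF_transport

theorem null_preserving_implies_orthogonal_general {U : Set (Matrix m n ℂ)} (hU : IsOpen U)
    (hZ₀U : Z₀ ∈ U) (hZ₀ : Z₀ * Z₀ᴴ = 1) (hF : DifferentiableOn ℂ F U)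
    (hnull : ∀ Z ∈ U, Z * Zᴴ = 1 → F Z * (F Z)ᴴ = 1) :
    ∃ U' ⊆ U, IsOpen U' ∧ IsPreconnected U' ∧ Z₀ ∈ U' ∧
      ∀ Z ∈ U', ∀ W ∈ U', Z * Wᴴ = 1 → F Z * (F W)ᴴ = 1 := by
  have : LocallyConnectedSpace (Matrix m n ℂ) := inferInstanceAs (LocallyConnectedSpace (m → n → ℂ))
  have hU_nhds : ∀ᶠ Z in 𝓝 Z₀, Z ∈ U := hU.eventually_mem hZ₀U
  exact exists_isOpen_isPreconnected_forall_of_eventually hU_nhds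
    (eventually_orthogonal_imp_map_orthogonal hZ₀
      (hU_nhds.mono fun Z hZ ↦ hF.differentiableAt (hU.mem_nhds hZ)) (hU_nhds.mono hnull))

end NullPreserving

/-- Let `r ≤ s`, `r' ≤ s'` be positive integers, `U ⊆ ℂ^{r×s}` open and
connected containing a null point `Z₀` (`Z₀·Z₀ᴴ = I_r`), and let `F : U → ℂ^{r'×s'}` be
holomorphic mapping null points to null points.  Then there is an open connected
`U' ⊆ U` containing a null point on which `F` is an orthogonal map: `Z, W ∈ U'` with
`Z·Wᴴ = I_r` imply `F(Z)·F(W)ᴴ = I_{r'}`. -/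
theorem null_preserving_implies_orthogonal
    (r s r' s' : ℕ) (hr : 0 < r) (hrs : r ≤ s) (hr' : 0 < r') (hr's' : r' ≤ s')
    (U : Set (Fin r → Fin s → ℂ)) (hopen : IsOpen U) (hconn : IsPreconnected U)
    (Z₀ : Fin r → Fin s → ℂ) (hZ₀U : Z₀ ∈ U)
    (hZ₀ : Matrix.of Z₀ * (Matrix.of Z₀)ᴴ = (1 : Matrix (Fin r) (Fin r) ℂ))
    (F : (Fin r → Fin s → ℂ) → Fin r' → Fin s' → ℂ)
    (hF : DifferentiableOn ℂ F U)
    (hnullpres : ∀ Z ∈ U, Matrix.of Z * (Matrix.of Z)ᴴ = (1 : Matrix (Fin r) (Fin r) ℂ) →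
      Matrix.of (F Z) * (Matrix.of (F Z))ᴴ = (1 : Matrix (Fin r') (Fin r') ℂ)) :
    ∃ U' ⊆ U, IsOpen U' ∧ IsPreconnected U' ∧
      (∃ Z₁ ∈ U', Matrix.of Z₁ * (Matrix.of Z₁)ᴴ = (1 : Matrix (Fin r) (Fin r) ℂ)) ∧
      ∀ Z ∈ U', ∀ W ∈ U',
        Matrix.of Z * (Matrix.of W)ᴴ = (1 : Matrix (Fin r) (Fin r) ℂ) →
        Matrix.of (F Z) * (Matrix.of (F W))ᴴ = (1 : Matrix (Fin r') (Fin r') ℂ) := by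
  obtain ⟨U', hU'U, hU'_open, hU'_conn, hZ₀U', hU'_orth⟩ :=
    null_preserving_implies_orthogonal_general (F := F) hopen hZ₀U hZ₀ hF hnullpres
  exact ⟨U', hU'U, hU'_open, hU'_conn, ⟨Z₀, hZ₀U', hZ₀⟩, hU'_orth⟩
end
end

section
/- Let s ≥ 2 and 1 ≤ r' ≤ s' be integers, and let F : U → ℂ^{r'×s'} be a local orthogonal map in chart form from 𝒢(1,s) to 𝒢(r',s'). For a subset S ⊆ U let V_{F(S)} ⊆ ℂ^{r'+s'} denote the ℂ-linear span of the union over w ∈ S of rowSpan([I_{r'} | F(w)]). Suppose that for every z₀ ∈ U one has dim V_{F({w ∈ U : w·z₀ᴴ = 1})} = dim V_{F(U)}. Then F is null, i.e. F(z)·F(z)ᴴ = I_{r'} for every z ∈ U. -/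
open scoped BigOperators
open Matrix

noncomputable section

/-- The chart matrix `[I_r | Z]`. -/
def chartMat (r s : ℕ) (Z : Matrix (Fin r) (Fin s) ℂ) : Matrix (Fin r) (Fin (r + s)) ℂ :=
  Matrix.of fun i j =>
    if h : (j : ℕ) < r then (if (i : ℕ) = (j : ℕ) then 1 else 0)
    else Z i ⟨(j : ℕ) - r, by have := j.isLt; omega⟩

/-- `VF F S` is the ℂ-linear span in `ℂ^{r'+s'}` of the union over `w ∈ S` of the rows
of the chart matrices `[I_{r'} | F(w)]`. -/
def VF {s r' s' : ℕ} (F : (Fin s → ℂ) → Fin r' → Fin s' → ℂ)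
    (S : Set (Fin s → ℂ)) : Submodule ℂ (Fin (r' + s') → ℂ) :=
  Submodule.span ℂ (⋃ w ∈ S, Set.range fun i => chartMat r' s' (Matrix.of (F w)) i)

/-!
The matrices `[I | Z]` whose rows are all orthogonal to those of a fixed `[I | W]`, with respect to
the form of signature `(r, s)`, are those whose rows lie in a fixed linear subspace. Orthogonality
to `[I | W]` therefore passes from a family of chart points to every chart point in their linear
span. The dimension condition says that the values of `F` on the hyperplane orthogonal to `z₀`
already span `VF F U`, so `F z₀` is orthogonal to every value of `F`, in particular to itself.
-/

/-- The signature matrix `I_{r,s} = diag(I_r, -I_s)` of the indefinite Hermitian form on row vectors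
in `ℂ^{r+s}`; its diagonal is indexed so as to match the two blocks of `chartMat`. -/
def signatureMat (r s : ℕ) : Matrix (Fin (r + s)) (Fin (r + s)) ℂ :=
  diagonal (Fin.append 1 (-1))

/-- The orthogonal complement of the row space of `[I_r | W]` with respect to the form of signature
`(r, s)`, encoded as the kernel of `v ↦ v · I_{r,s} · [I_r | W]ᴴ`. Orthogonality of chart points
to `[I_r | W]` is membership of their rows in this subspace. -/
def chartOrthogonal {r s : ℕ} (W : Matrix (Fin r) (Fin s) ℂ) : Submodule ℂ (Fin (r + s) → ℂ) :=
  LinearMap.ker (signatureMat r s * (chartMat r s W)ᴴ).vecMulLinear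

section Chart

variable {r s : ℕ} (Z W : Matrix (Fin r) (Fin s) ℂ)

theorem chartMat_castAdd (i j : Fin r) :
    chartMat r s Z i (Fin.castAdd s j) = (1 : Matrix (Fin r) (Fin r) ℂ) i j := by
  simp [chartMat, one_apply, Fin.ext_iff]

theorem chartMat_natAdd (i : Fin r) (j : Fin s) : chartMat r s Z i (Fin.natAdd r j) = Z i j := by
  simp [chartMat]

theorem chartMat_mul_signatureMat_mul_conjTranspose :
    chartMat r s Z * (signatureMat r s * (chartMat r s W)ᴴ) = 1 - Z * Wᴴ := by
  ext i k
  rw [Matrix.sub_apply, Matrix.mul_apply, Matrix.mul_apply, Fin.sum_univ_add]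
  simp [signatureMat, diagonal_mul, chartMat_castAdd, chartMat_natAdd, one_apply,
    sub_eq_add_neg]

variable {Z W}

theorem forall_chartMat_mem_chartOrthogonal_iff :
    (∀ i, chartMat r s Z i ∈ chartOrthogonal W) ↔ Z * Wᴴ = 1 :=
  -- Row `i` of `A * B` is definitionally `A i ᵥ* B`.
  calc (∀ i, chartMat r s Z i ∈ chartOrthogonal W)
      ↔ chartMat r s Z * (signatureMat r s * (chartMat r s W)ᴴ) = 0 := funext_iff.symm
    _ ↔ Z * Wᴴ = 1 := by
      rw [chartMat_mul_signatureMat_mul_conjTranspose, sub_eq_zero, eq_comm]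

end Chart

section Span

variable {s r' s' : ℕ} {F : (Fin s → ℂ) → Fin r' → Fin s' → ℂ} {S T : Set (Fin s → ℂ)}
  {W : Matrix (Fin r') (Fin s') ℂ}

theorem VF_mono (hST : S ⊆ T) : VF F S ≤ VF F T :=
  Submodule.span_mono (Set.biUnion_subset_biUnion_left hST)

theorem VF_le_chartOrthogonal_iff :
    VF F S ≤ chartOrthogonal W ↔ ∀ w ∈ S, Matrix.of (F w) * Wᴴ = 1 := by
  simp only [VF, Submodule.span_le, Set.iUnion₂_subset_iff, Set.range_subset_iff, SetLike.mem_coe,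
    forall_chartMat_mem_chartOrthogonal_iff]

theorem mul_conjTranspose_eq_one_of_finrank_VF_eq (hST : S ⊆ T)
    (hdim : Module.finrank ℂ ↥(VF F S) = Module.finrank ℂ ↥(VF F T))
    (horth : ∀ w ∈ S, Matrix.of (F w) * Wᴴ = 1) :
    ∀ z ∈ T, Matrix.of (F z) * Wᴴ = 1 := by
  have hspan : VF F S = VF F T := Submodule.eq_of_le_of_finrank_eq (VF_mono hST) hdim
  rw [← VF_le_chartOrthogonal_iff] at horth ⊢
  exact hspan ▸ horth

end Span

theorem hyperplane_span_condition_implies_null_general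
    {s r' s' : ℕ} {U : Set (Fin s → ℂ)} {F : (Fin s → ℂ) → Fin r' → Fin s' → ℂ} {z₀ : Fin s → ℂ}
    (horth : ∀ w ∈ U, cdot w z₀ = 1 → Matrix.of (F w) * (Matrix.of (F z₀))ᴴ = 1)
    (hdim : Module.finrank ℂ ↥(VF F {w ∈ U | cdot w z₀ = 1}) = Module.finrank ℂ ↥(VF F U)) :
    ∀ z ∈ U, Matrix.of (F z) * (Matrix.of (F z₀))ᴴ = 1 :=
  mul_conjTranspose_eq_one_of_finrank_VF_eq (Set.sep_subset _ _) hdim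
    fun w hw => horth w hw.1 hw.2

/-- Let `s ≥ 2`, `1 ≤ r' ≤ s'`, and let `F` be a local orthogonal map in
chart form from `𝒢(1,s)` to `𝒢(r',s')`.  If for every `z₀ ∈ U` the span of the images of
the orthogonal hyperplane trace `{w ∈ U : w·z₀ᴴ = 1}` has the same dimension as the span
of the image of `U`, then `F` is null: `F(z)·F(z)ᴴ = I_{r'}` for every `z ∈ U`. -/
theorem hyperplane_span_condition_implies_null
    (s r' s' : ℕ) (hs : 2 ≤ s) (hr' : 1 ≤ r') (hr's' : r' ≤ s')
    (U : Set (Fin s → ℂ)) (hopen : IsOpen U) (hconn : IsPreconnected U)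
    (hnull : ∃ z ∈ U, cdot z z = 1)
    (F : (Fin s → ℂ) → Fin r' → Fin s' → ℂ)
    (hF : DifferentiableOn ℂ F U)
    (horth : ∀ z ∈ U, ∀ w ∈ U, cdot z w = 1 →
      Matrix.of (F z) * (Matrix.of (F w))ᴴ = (1 : Matrix (Fin r') (Fin r') ℂ))
    (hdim : ∀ z₀ ∈ U,
      Module.finrank ℂ ↥(VF F {w ∈ U | cdot w z₀ = 1}) = Module.finrank ℂ ↥(VF F U)) :
    ∀ z ∈ U, Matrix.of (F z) * (Matrix.of (F z))ᴴ = (1 : Matrix (Fin r') (Fin r') ℂ) :=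
  fun z hz => hyperplane_span_condition_implies_null_general
    (fun w hw => horth w hw z hz) (hdim z hz) z hz
end
end
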